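/- Assume the model equation y_t = μ* + Σ_{j=1}^p Σ_{k=0}^{l_j} φ*_{j,k} z_{j,k,t} W_j y_t + X_t β* + ε_t holds for every t = 1, …, T. Suppose the r×r matrix X^⊤ B^ν (B^ν)^⊤ X is invertible, and that the L×L matrix A^⊤A is invertible where A := B^⊤ V − Ξ Y_W. Then the least-squares estimator φ̃ := (A^⊤A)^{-1} A^⊤ (B^⊤ y − Ξ y^ν) satisfies the exact identity φ̃ − φ* = (A^⊤A)^{-1} A^⊤ (B^⊤ ε − Ξ ε^ν), where ε := vec((ε_1, …, ε_T)^⊤) and ε^ν := (ε_1^⊤, …, ε_T^⊤)^⊤. -/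

import Mathlib

open Matrix
open scoped Kronecker

noncomputable section

/-- `vec` of a matrix: the column vector obtained by stacking the columns. -/
def mvec {m n : Type*} (M : Matrix m n ℝ) : n × m → ℝ := fun p => M p.2 p.1

/-- A vector viewed as a column matrix. -/
def colMat {m : Type*} (v : m → ℝ) : Matrix m Unit ℝ := Matrix.of fun i _ => v i

/-- A vector viewed as a row matrix. -/
def rowMat {n : Type*} (v : n → ℝ) : Matrix Unit n ℝ := Matrix.of fun _ j => v j

/-- `B̄ := T⁻¹ Σ_t B_t`. -/
def Bbar {d T v : ℕ} (B : Fin T → Matrix (Fin d) (Fin v) ℝ) :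
    Matrix (Fin d) (Fin v) ℝ :=
  (T : ℝ)⁻¹ • ∑ t, B t

/-- `B^ν`: the vertical stack of the blocks `B_t − B̄`. -/
def Bnu {d T v : ℕ} (B : Fin T → Matrix (Fin d) (Fin v) ℝ) :
    Matrix (Fin T × Fin d) (Fin v) ℝ :=
  Matrix.of fun q s => (B q.1 - Bbar B) q.2 s

/-- `X`: the vertical stack of the matrices `X_t`. -/
def Xstack {d T r : ℕ} (X : Fin T → Matrix (Fin d) (Fin r) ℝ) :
    Matrix (Fin T × Fin d) (Fin r) ℝ :=
  Matrix.of fun q s => X q.1 q.2 s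

/-- The vertical stack `(w_1ᵀ, …, w_Tᵀ)ᵀ ∈ ℝ^{Td}` (used for `y^ν`, `ε^ν`). -/
def enu {d T : ℕ} (w : Fin T → Fin d → ℝ) : Fin T × Fin d → ℝ := fun q => w q.1 q.2

/-- `vec((w_1, …, w_T)ᵀ) ∈ ℝ^{Td}` (used for the vectorized `y` and `ε`). -/
def yvec {d T : ℕ} (w : Fin T → Fin d → ℝ) : Fin d × Fin T → ℝ := fun q => w q.2 q.1

/-- The `r × r` matrix `Xᵀ B^ν (B^ν)ᵀ X`. -/
def Gram {d T r v : ℕ} (X : Fin T → Matrix (Fin d) (Fin r) ℝ)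
    (B : Fin T → Matrix (Fin d) (Fin v) ℝ) : Matrix (Fin r) (Fin r) ℝ :=
  (Xstack X)ᵀ * Bnu B * (Bnu B)ᵀ * Xstack X

/-- The profiled least-squares coefficient `β(φ)`. -/
def betaOf {d T p r v : ℕ} (l : Fin p → ℕ) (W : Fin p → Matrix (Fin d) (Fin d) ℝ)
    (z : Fin T → (j : Fin p) → Fin (l j + 1) → ℝ)
    (y : Fin T → Fin d → ℝ) (X : Fin T → Matrix (Fin d) (Fin r) ℝ)
    (B : Fin T → Matrix (Fin d) (Fin v) ℝ)
    (φ : ((j : Fin p) × Fin (l j + 1)) → ℝ) : Fin r → ℝ :=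
  ((Gram X B)⁻¹ * (Xstack X)ᵀ * Bnu B * (Bnu B)ᵀ).mulVec
    (enu y - ∑ jk : (j : Fin p) × Fin (l j + 1),
      φ jk • ((1 : Matrix (Fin T) (Fin T) ℝ) ⊗ₖ W jk.1).mulVec
        (fun q : Fin T × Fin d => z q.1 jk.1 jk.2 * y q.1 q.2))

/-- `(I_T ⊗ γᵀ)(B₁ − B̄, …, B_T − B̄)ᵀ`, a `T × d` matrix. -/
def Gmat {d T v : ℕ} (B : Fin T → Matrix (Fin d) (Fin v) ℝ) (γ : Fin v → ℝ) :
    Matrix (Fin T) (Fin d) ℝ :=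
  Matrix.submatrix (((1 : Matrix (Fin T) (Fin T) ℝ) ⊗ₖ rowMat γ) *
      (Matrix.of fun i (q : Fin T × Fin v) => (B q.1 - Bbar B) i q.2)ᵀ)
    (fun t => (t, ())) id

/-- `B := κ · I_d ⊗ {(I_T ⊗ γᵀ)(B₁ − B̄, …, B_T − B̄)ᵀ}`, a `(Td) × d²` matrix. -/
def augB {d T v : ℕ} (B : Fin T → Matrix (Fin d) (Fin v) ℝ) (γ : Fin v → ℝ)
    (κ : ℝ) : Matrix (Fin d × Fin T) (Fin d × Fin d) ℝ :=
  κ • ((1 : Matrix (Fin d) (Fin d) ℝ) ⊗ₖ Gmat B γ)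

/-- `X_c := I_d ⊗ {(I_T ⊗ cᵀ)(X₁, …, X_T)ᵀ}`, a `(Td) × d²` matrix. -/
def augX {d T r : ℕ} (X : Fin T → Matrix (Fin d) (Fin r) ℝ) (c : Fin r → ℝ) :
    Matrix (Fin d × Fin T) (Fin d × Fin d) ℝ :=
  (1 : Matrix (Fin d) (Fin d) ℝ) ⊗ₖ
    Matrix.submatrix (((1 : Matrix (Fin T) (Fin T) ℝ) ⊗ₖ rowMat c) *
        (Matrix.of fun i (q : Fin T × Fin r) => X q.1 i q.2)ᵀ)
      (fun t => (t, ())) id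

/-- `vec(I_d)`. -/
def vecId (d : ℕ) : Fin d × Fin d → ℝ := mvec (1 : Matrix (Fin d) (Fin d) ℝ)

/-- `X_t ⊗ (B_t − B̄)γ`, a `d² × r` matrix. -/
def kronXB {d T r v : ℕ} (X : Fin T → Matrix (Fin d) (Fin r) ℝ)
    (B : Fin T → Matrix (Fin d) (Fin v) ℝ) (γ : Fin v → ℝ) (t : Fin T) :
    Matrix (Fin d × Fin d) (Fin r) ℝ :=
  Matrix.submatrix ((X t) ⊗ₖ colMat ((B t - Bbar B).mulVec γ)) id (fun s => (s, ()))

/-- `Ξ := κ (Σ_t X_t ⊗ (B_t − B̄)γ)(Xᵀ B^ν (B^ν)ᵀ X)⁻¹ Xᵀ B^ν (B^ν)ᵀ`. -/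
def Xi {d T r v : ℕ} (X : Fin T → Matrix (Fin d) (Fin r) ℝ)
    (B : Fin T → Matrix (Fin d) (Fin v) ℝ) (γ : Fin v → ℝ) (κ : ℝ) :
    Matrix (Fin d × Fin d) (Fin T × Fin d) ℝ :=
  κ • ((∑ t, kronXB X B γ t) * (Gram X B)⁻¹ * (Xstack X)ᵀ * Bnu B * (Bnu B)ᵀ)

/-- `Γ_{j,k} := I_d ⊗ (z_{j,k,1} y_1, …, z_{j,k,T} y_T)ᵀ` (for weights `w t = z_{j,k,t}`). -/
def Gamma {d T : ℕ} (w : Fin T → ℝ) (y : Fin T → Fin d → ℝ) :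
    Matrix (Fin d × Fin T) (Fin d × Fin d) ℝ :=
  (1 : Matrix (Fin d) (Fin d) ℝ) ⊗ₖ Matrix.of fun t i => w t * y t i

/-- `V`: the `(Td) × L` matrix whose `(j,k)`-th column is `Γ_{j,k} vec(W_jᵀ)`. -/
def Vmat {d T p : ℕ} (l : Fin p → ℕ) (W : Fin p → Matrix (Fin d) (Fin d) ℝ)
    (z : Fin T → (j : Fin p) → Fin (l j + 1) → ℝ) (y : Fin T → Fin d → ℝ) :
    Matrix (Fin d × Fin T) ((j : Fin p) × Fin (l j + 1)) ℝ :=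
  Matrix.of fun q c => (Gamma (fun t => z t c.1 c.2) y).mulVec (mvec (W c.1)ᵀ) q

/-- `Y_W`: the `(Td) × L` matrix whose `(j,k)`-th column is `(I_T ⊗ W_j) y^ν_{j,k}`. -/
def YW {d T p : ℕ} (l : Fin p → ℕ) (W : Fin p → Matrix (Fin d) (Fin d) ℝ)
    (z : Fin T → (j : Fin p) → Fin (l j + 1) → ℝ) (y : Fin T → Fin d → ℝ) :
    Matrix (Fin T × Fin d) ((j : Fin p) × Fin (l j + 1)) ℝ :=
  Matrix.of fun q c =>
    ((1 : Matrix (Fin T) (Fin T) ℝ) ⊗ₖ W c.1).mulVec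
      (fun q' : Fin T × Fin d => z q'.1 c.1 c.2 * y q'.1 q'.2) q


/-- `A := BᵀV − Ξ Y_W`, the design matrix of the profiled linear problem. -/
def Amat {d T p r v : ℕ} (l : Fin p → ℕ) (W : Fin p → Matrix (Fin d) (Fin d) ℝ)
    (z : Fin T → (j : Fin p) → Fin (l j + 1) → ℝ) (y : Fin T → Fin d → ℝ)
    (X : Fin T → Matrix (Fin d) (Fin r) ℝ)
    (B : Fin T → Matrix (Fin d) (Fin v) ℝ) (γ : Fin v → ℝ) (κ : ℝ) :
    Matrix (Fin d × Fin d) ((j : Fin p) × Fin (l j + 1)) ℝ :=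
  (augB B γ κ)ᵀ * Vmat l W z y - Xi X B γ κ * YW l W z y

/-! The map `w ↦ Bᵀ vec(w) − Ξ w^ν` annihilates every sequence constant in time, because the
deviations `B_t − B̄` sum to zero, and every sequence `X_t β`, because `Ξ` is built to cancel `Bᵀ`
there. It sends the `(j,k)`-th lag `z_{j,k,t} W_j y_t` to the `(j,k)`-th column of `A`. Applied to
the model equation it gives `Bᵀ y − Ξ y^ν = A φ* + (Bᵀ ε − Ξ ε^ν)`, and any left inverse of `A`
recovers `φ*` up to the image of the error term. -/

section MatrixIdentities

variable {l m n R : Type*}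

lemma transpose_mul_eq_sum_vecMulVec [Fintype l] [NonUnitalNonAssocSemiring R]
    (M : Matrix l m R) (N : Matrix l n R) :
    Mᵀ * N = ∑ t, vecMulVec (M t) (N t) := by
  ext i j
  simp only [mul_apply, transpose_apply, Matrix.sum_apply, vecMulVec_apply]

lemma sum_vecMulVec {ι : Type*} [NonUnitalNonAssocSemiring R] (s : Finset ι) (u : ι → m → R)
    (v : n → R) : ∑ t ∈ s, vecMulVec (u t) v = vecMulVec (∑ t ∈ s, u t) v := by
  ext i j
  simp only [Matrix.sum_apply, vecMulVec_apply, Finset.sum_apply, Finset.sum_mul]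

lemma gram_inv_mul_transpose_mul_self [Fintype m] [Fintype n] [DecidableEq n] [CommRing R]
    {M : Matrix m n R} (hM : IsUnit (Mᵀ * M)) : (Mᵀ * M)⁻¹ * Mᵀ * M = 1 := by
  rw [Matrix.mul_assoc, nonsing_inv_mul _ ((isUnit_iff_isUnit_det _).mp hM)]

end MatrixIdentities

/-- The weighted spatial lag `c_t M y_t` of a sequence `y`; the regressor with coefficient `φ_{j,k}`
is the one with `c_t = z_{j,k,t}` and `M = W_j`. -/
def weightedLag {τ m n : Type*} [Fintype n] (c : τ → ℝ) (M : Matrix m n ℝ) (y : τ → n → ℝ) :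
    τ → m → ℝ :=
  fun t => c t • M *ᵥ y t

section Model

variable {d T p r v : ℕ}

lemma sum_sub_Bbar (B : Fin T → Matrix (Fin d) (Fin v) ℝ) : ∑ t, (B t - Bbar B) = 0 := by
  have hBbar : Bbar B = Finset.expect Finset.univ B := by
    simp [Bbar, Finset.expect, ← NNRat.cast_smul_eq_nnqsmul ℝ]
  simpa only [Fintype.balance_apply, hBbar] using Fintype.sum_balance B

lemma Gmat_row (B : Fin T → Matrix (Fin d) (Fin v) ℝ) (γ : Fin v → ℝ) (t : Fin T) :
    Gmat B γ t = (B t - Bbar B) *ᵥ γ := by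
  ext a
  simp [Gmat, mul_apply, rowMat, Fintype.sum_prod_type, one_apply, mulVec, dotProduct, mul_comm]

lemma augB_transpose_mulVec_yvec (B : Fin T → Matrix (Fin d) (Fin v) ℝ) (γ : Fin v → ℝ) (κ : ℝ)
    (w : Fin T → Fin d → ℝ) :
    (augB B γ κ)ᵀ *ᵥ yvec w = κ • vec (∑ t, vecMulVec ((B t - Bbar B) *ᵥ γ) (w t)) := by
  have hvec : yvec w = vec (of w) := rfl
  rw [augB, transpose_smul, smul_mulVec, ← kroneckerMap_transpose, transpose_one, hvec,
    ← vec_mul_eq_mulVec, transpose_mul_eq_sum_vecMulVec]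
  simp only [Gmat_row]
  rfl

lemma augB_transpose_mulVec_yvec_const (B : Fin T → Matrix (Fin d) (Fin v) ℝ) (γ : Fin v → ℝ)
    (κ : ℝ) (μ : Fin d → ℝ) : (augB B γ κ)ᵀ *ᵥ yvec (fun _ => μ) = 0 := by
  have hsum : ∑ t, vecMulVec ((B t - Bbar B) *ᵥ γ) μ = 0 := by
    rw [sum_vecMulVec, ← sum_mulVec, sum_sub_Bbar, zero_mulVec, zero_vecMulVec]
  rw [augB_transpose_mulVec_yvec, hsum, vec_zero, smul_zero]

lemma kronXB_mulVec (X : Fin T → Matrix (Fin d) (Fin r) ℝ) (B : Fin T → Matrix (Fin d) (Fin v) ℝ)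
    (γ : Fin v → ℝ) (t : Fin T) (β : Fin r → ℝ) :
    kronXB X B γ t *ᵥ β = vec (vecMulVec ((B t - Bbar B) *ᵥ γ) (X t *ᵥ β)) := by
  ext ⟨i, a⟩
  rw [vec, vecMulVec_apply, mul_comm]
  change ∑ s, X t i s * ((B t - Bbar B) *ᵥ γ) a * β s = (∑ s, X t i s * β s) * _
  simp only [Finset.sum_mul, mul_right_comm]

lemma augB_transpose_mulVec_yvec_regressor (X : Fin T → Matrix (Fin d) (Fin r) ℝ)
    (B : Fin T → Matrix (Fin d) (Fin v) ℝ) (γ : Fin v → ℝ) (κ : ℝ) (β : Fin r → ℝ) :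
    (augB B γ κ)ᵀ *ᵥ yvec (fun t => X t *ᵥ β) = κ • (∑ t, kronXB X B γ t) *ᵥ β := by
  rw [augB_transpose_mulVec_yvec, sum_mulVec, vec_sum]
  simp only [kronXB_mulVec]

lemma Bnu_transpose_mulVec_enu (B : Fin T → Matrix (Fin d) (Fin v) ℝ) (w : Fin T → Fin d → ℝ) :
    (Bnu B)ᵀ *ᵥ enu w = ∑ t, (B t - Bbar B)ᵀ *ᵥ w t := by
  ext s
  simp only [mulVec, dotProduct, transpose_apply, Bnu, of_apply, enu, Fintype.sum_prod_type,
    Finset.sum_apply]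

lemma Xi_mulVec_enu_const (X : Fin T → Matrix (Fin d) (Fin r) ℝ)
    (B : Fin T → Matrix (Fin d) (Fin v) ℝ) (γ : Fin v → ℝ) (κ : ℝ) (μ : Fin d → ℝ) :
    Xi X B γ κ *ᵥ enu (fun _ => μ) = 0 := by
  have hBnu : (Bnu B)ᵀ *ᵥ enu (fun _ : Fin T => μ) = 0 := by
    rw [Bnu_transpose_mulVec_enu, ← sum_mulVec, ← transpose_sum, sum_sub_Bbar, transpose_zero,
      zero_mulVec]
  rw [Xi, smul_mulVec, ← mulVec_mulVec, hBnu, mulVec_zero, smul_zero]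

lemma Xi_mul_Xstack {X : Fin T → Matrix (Fin d) (Fin r) ℝ} {B : Fin T → Matrix (Fin d) (Fin v) ℝ}
    (hGram : IsUnit (Gram X B)) (γ : Fin v → ℝ) (κ : ℝ) :
    Xi X B γ κ * Xstack X = κ • ∑ t, kronXB X B γ t := by
  calc Xi X B γ κ * Xstack X
      = κ • ((∑ t, kronXB X B γ t) * ((Gram X B)⁻¹ * Gram X B)) := by
        simp only [Xi, Gram, Matrix.smul_mul, Matrix.mul_assoc]
    _ = κ • ∑ t, kronXB X B γ t := by
        rw [nonsing_inv_mul _ ((isUnit_iff_isUnit_det _).mp hGram), Matrix.mul_one]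

lemma Xi_mulVec_enu_regressor {X : Fin T → Matrix (Fin d) (Fin r) ℝ}
    {B : Fin T → Matrix (Fin d) (Fin v) ℝ} (hGram : IsUnit (Gram X B)) (γ : Fin v → ℝ) (κ : ℝ)
    (β : Fin r → ℝ) :
    Xi X B γ κ *ᵥ enu (fun t => X t *ᵥ β) = κ • (∑ t, kronXB X B γ t) *ᵥ β := by
  have hstack : enu (fun t => X t *ᵥ β) = Xstack X *ᵥ β := rfl
  rw [hstack, mulVec_mulVec, Xi_mul_Xstack hGram, smul_mulVec]

lemma Gamma_mulVec_mvec_transpose (c : Fin T → ℝ) (M : Matrix (Fin d) (Fin d) ℝ)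
    (y : Fin T → Fin d → ℝ) : Gamma c y *ᵥ mvec Mᵀ = yvec (weightedLag c M y) := by
  have hvec : mvec Mᵀ = vec Mᵀ := rfl
  rw [Gamma, hvec, ← vec_mul_eq_mulVec]
  ext ⟨i, t⟩
  rw [vec, mul_apply_eq_vecMul, vecMul_transpose]
  exact congrFun (mulVec_smul M (c t) (y t)) i

lemma one_kronecker_mulVec_enu (M : Matrix (Fin d) (Fin d) ℝ) (w : Fin T → Fin d → ℝ) :
    ((1 : Matrix (Fin T) (Fin T) ℝ) ⊗ₖ M) *ᵥ enu w = enu fun t => M *ᵥ w t := by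
  have hvec : enu w = vec (of w)ᵀ := rfl
  rw [hvec, ← vec_mul_eq_mulVec]
  rfl

lemma Vmat_col (l : Fin p → ℕ) (W : Fin p → Matrix (Fin d) (Fin d) ℝ)
    (z : Fin T → (j : Fin p) → Fin (l j + 1) → ℝ) (y : Fin T → Fin d → ℝ)
    (jk : (j : Fin p) × Fin (l j + 1)) :
    (Vmat l W z y).col jk = yvec (weightedLag (fun t => z t jk.1 jk.2) (W jk.1) y) :=
  Gamma_mulVec_mvec_transpose _ _ _

lemma YW_col (l : Fin p → ℕ) (W : Fin p → Matrix (Fin d) (Fin d) ℝ)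
    (z : Fin T → (j : Fin p) → Fin (l j + 1) → ℝ) (y : Fin T → Fin d → ℝ)
    (jk : (j : Fin p) × Fin (l j + 1)) :
    (YW l W z y).col jk = enu (weightedLag (fun t => z t jk.1 jk.2) (W jk.1) y) := by
  refine (one_kronecker_mulVec_enu (W jk.1) fun t => z t jk.1 jk.2 • y t).trans ?_
  simp only [mulVec_smul]
  rfl

/-- The linear map `w ↦ Bᵀ vec(w) − Ξ w^ν`, the instrumented moments of a sequence `w` after the
coefficient `β` of the regressors `X_t` has been profiled out. -/
def profiledMoment (X : Fin T → Matrix (Fin d) (Fin r) ℝ) (B : Fin T → Matrix (Fin d) (Fin v) ℝ)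
    (γ : Fin v → ℝ) (κ : ℝ) : (Fin T → Fin d → ℝ) →ₗ[ℝ] (Fin d × Fin d → ℝ) where
  toFun w := (augB B γ κ)ᵀ *ᵥ yvec w - Xi X B γ κ *ᵥ enu w
  map_add' w₁ w₂ := by
    have hyvec : yvec (w₁ + w₂) = yvec w₁ + yvec w₂ := rfl
    have henu : enu (w₁ + w₂) = enu w₁ + enu w₂ := rfl
    rw [hyvec, henu, mulVec_add, mulVec_add, add_sub_add_comm]
  map_smul' a w := by
    have hyvec : yvec (a • w) = a • yvec w := rfl
    have henu : enu (a • w) = a • enu w := rfl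
    rw [hyvec, henu, mulVec_smul, mulVec_smul, ← smul_sub, RingHom.id_apply]

lemma profiledMoment_apply (X : Fin T → Matrix (Fin d) (Fin r) ℝ)
    (B : Fin T → Matrix (Fin d) (Fin v) ℝ) (γ : Fin v → ℝ) (κ : ℝ) (w : Fin T → Fin d → ℝ) :
    profiledMoment X B γ κ w = (augB B γ κ)ᵀ *ᵥ yvec w - Xi X B γ κ *ᵥ enu w :=
  rfl

lemma profiledMoment_const (X : Fin T → Matrix (Fin d) (Fin r) ℝ)
    (B : Fin T → Matrix (Fin d) (Fin v) ℝ) (γ : Fin v → ℝ) (κ : ℝ) (μ : Fin d → ℝ) :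
    profiledMoment X B γ κ (fun _ => μ) = 0 := by
  rw [profiledMoment_apply, augB_transpose_mulVec_yvec_const, Xi_mulVec_enu_const, sub_zero]

lemma profiledMoment_regressor {X : Fin T → Matrix (Fin d) (Fin r) ℝ}
    {B : Fin T → Matrix (Fin d) (Fin v) ℝ} (hGram : IsUnit (Gram X B)) (γ : Fin v → ℝ) (κ : ℝ)
    (β : Fin r → ℝ) : profiledMoment X B γ κ (fun t => X t *ᵥ β) = 0 := by
  rw [profiledMoment_apply, augB_transpose_mulVec_yvec_regressor, Xi_mulVec_enu_regressor hGram,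
    sub_self]

lemma Amat_col (l : Fin p → ℕ) (W : Fin p → Matrix (Fin d) (Fin d) ℝ)
    (z : Fin T → (j : Fin p) → Fin (l j + 1) → ℝ) (y : Fin T → Fin d → ℝ)
    (X : Fin T → Matrix (Fin d) (Fin r) ℝ) (B : Fin T → Matrix (Fin d) (Fin v) ℝ) (γ : Fin v → ℝ)
    (κ : ℝ) (jk : (j : Fin p) × Fin (l j + 1)) :
    (Amat l W z y X B γ κ).col jk
      = profiledMoment X B γ κ (weightedLag (fun t => z t jk.1 jk.2) (W jk.1) y) := by
  rw [profiledMoment_apply, ← Vmat_col, ← YW_col]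
  rfl

lemma Amat_mulVec (l : Fin p → ℕ) (W : Fin p → Matrix (Fin d) (Fin d) ℝ)
    (z : Fin T → (j : Fin p) → Fin (l j + 1) → ℝ) (y : Fin T → Fin d → ℝ)
    (X : Fin T → Matrix (Fin d) (Fin r) ℝ) (B : Fin T → Matrix (Fin d) (Fin v) ℝ) (γ : Fin v → ℝ)
    (κ : ℝ) (φ : ((j : Fin p) × Fin (l j + 1)) → ℝ) :
    Amat l W z y X B γ κ *ᵥ φ = profiledMoment X B γ κ
      (∑ jk, φ jk • weightedLag (fun t => z t jk.1 jk.2) (W jk.1) y) := by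
  simp only [map_sum, map_smul, ← Amat_col, mulVec_eq_sum, op_smul_eq_smul]
  rfl

lemma profiledMoment_response {l : Fin p → ℕ} {W : Fin p → Matrix (Fin d) (Fin d) ℝ}
    {z : Fin T → (j : Fin p) → Fin (l j + 1) → ℝ} {y ε : Fin T → Fin d → ℝ}
    {X : Fin T → Matrix (Fin d) (Fin r) ℝ} {B : Fin T → Matrix (Fin d) (Fin v) ℝ}
    {μ : Fin d → ℝ} {β : Fin r → ℝ} {φ : (j : Fin p) → Fin (l j + 1) → ℝ}
    (hmodel : ∀ t, y t = μ + (∑ j, ∑ k, (φ j k * z t j k) • W j *ᵥ y t) + X t *ᵥ β + ε t)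
    (hGram : IsUnit (Gram X B)) (γ : Fin v → ℝ) (κ : ℝ) :
    profiledMoment X B γ κ y
      = Amat l W z y X B γ κ *ᵥ (fun jk => φ jk.1 jk.2) + profiledMoment X B γ κ ε := by
  have hy : y = (fun _ => μ)
      + (∑ jk : (j : Fin p) × Fin (l j + 1),
          φ jk.1 jk.2 • weightedLag (fun t => z t jk.1 jk.2) (W jk.1) y)
      + (fun t => X t *ᵥ β) + ε := by
    funext t
    conv_lhs => rw [hmodel t]
    simp only [Pi.add_apply, Finset.sum_apply, Pi.smul_apply, weightedLag, Fintype.sum_sigma,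
      smul_smul]
  conv_lhs => rw [hy]
  rw [map_add, map_add, map_add, profiledMoment_const, profiledMoment_regressor hGram,
    ← Amat_mulVec, zero_add, add_zero]

end Model

theorem statement16_general {d T p r v : ℕ} {l : Fin p → ℕ}
    {W : Fin p → Matrix (Fin d) (Fin d) ℝ} {z : Fin T → (j : Fin p) → Fin (l j + 1) → ℝ}
    {y ε : Fin T → Fin d → ℝ} {X : Fin T → Matrix (Fin d) (Fin r) ℝ}
    {B : Fin T → Matrix (Fin d) (Fin v) ℝ} {γ : Fin v → ℝ} {κ : ℝ}
    {μstar : Fin d → ℝ} {βstar : Fin r → ℝ} {φstar : (j : Fin p) → Fin (l j + 1) → ℝ}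
    (hmodel : ∀ t, y t = μstar
        + (∑ j, ∑ k, (φstar j k * z t j k) • W j *ᵥ y t) + X t *ᵥ βstar + ε t)
    (hGram : IsUnit (Gram X B))
    {P : Matrix ((j : Fin p) × Fin (l j + 1)) (Fin d × Fin d) ℝ}
    (hP : P * Amat l W z y X B γ κ = 1) :
    P *ᵥ ((augB B γ κ)ᵀ *ᵥ yvec y - Xi X B γ κ *ᵥ enu y) - (fun jk => φstar jk.1 jk.2)
      = P *ᵥ ((augB B γ κ)ᵀ *ᵥ yvec ε - Xi X B γ κ *ᵥ enu ε) := by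
  rw [← profiledMoment_apply, ← profiledMoment_apply, profiledMoment_response hmodel hGram,
    mulVec_add, mulVec_mulVec, hP, one_mulVec, add_sub_cancel_left]

/-- under the model equation, the least-squares estimator
`φ̃ := (AᵀA)⁻¹ Aᵀ (Bᵀy − Ξ y^ν)` satisfies the exact identity
`φ̃ − φ* = (AᵀA)⁻¹ Aᵀ (Bᵀε − Ξ ε^ν)`. -/
theorem statement16 (d T p r v : ℕ) (hd : 0 < d) (hT : 0 < T) (hp : 0 < p)
    (hr : 0 < r) (hv : 0 < v)
    (l : Fin p → ℕ) (W : Fin p → Matrix (Fin d) (Fin d) ℝ)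
    (z : Fin T → (j : Fin p) → Fin (l j + 1) → ℝ) (hz : ∀ t j, z t j 0 = 1)
    (y ε : Fin T → Fin d → ℝ) (X : Fin T → Matrix (Fin d) (Fin r) ℝ)
    (B : Fin T → Matrix (Fin d) (Fin v) ℝ) (γ : Fin v → ℝ) (κ : ℝ) (hκ : κ ≠ 0)
    (μstar : Fin d → ℝ) (βstar : Fin r → ℝ)
    (φstar : (j : Fin p) → Fin (l j + 1) → ℝ)
    (hmodel : ∀ t, y t = μstar
        + (∑ j, ∑ k, (φstar j k * z t j k) • (W j).mulVec (y t))
        + (X t).mulVec βstar + ε t)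
    (hGram : IsUnit (Gram X B))
    (hA : IsUnit ((Amat l W z y X B γ κ)ᵀ * Amat l W z y X B γ κ)) :
    (((Amat l W z y X B γ κ)ᵀ * Amat l W z y X B γ κ)⁻¹ *
          (Amat l W z y X B γ κ)ᵀ).mulVec
        ((augB B γ κ)ᵀ.mulVec (yvec y) - (Xi X B γ κ).mulVec (enu y))
      - (fun jk => φstar jk.1 jk.2)
    = (((Amat l W z y X B γ κ)ᵀ * Amat l W z y X B γ κ)⁻¹ *
          (Amat l W z y X B γ κ)ᵀ).mulVec
        ((augB B γ κ)ᵀ.mulVec (yvec ε) - (Xi X B γ κ).mulVec (enu ε)) :=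
  statement16_general hmodel hGram (gram_inv_mul_transpose_mul_self hA)
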